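/- arXiv:1310.2189 — 2 statements merged into one kernel-verified Lean document; each statement's English description precedes it below -/
import Mathlib

section
/- Let k be a number field containing a square root of −1 (i.e., there exists i ∈ k with i² = −1). Consider the polynomial S(T) = 1 + 84375·T⁴ ∈ k[T] (where 84375 = 5⁵·3³). Then S(T) is irreducible over k if and only if 15 is not a square in k (i.e., there is no x ∈ k with x² = 15). -/
open Polynomial

/-!
Irreducibility of `X ^ n - a` propagates along the prime factors of `n`: if `x ^ p = a` has degree
`p` over `K` and `x = b ^ q` in `K(x)`, then `N(b) ^ q = N(x) = ± a`. When `-1` is a square in `K`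
it is a `q`-th power for every prime `q`, so the sign can be absorbed and `a` itself is a `q`-th
power. Hence `X ^ 4 - a` is irreducible exactly when `a` is not a square; up to a constant factor
`S` is such a polynomial with `a = -1 / 84375`, and `84375 = 15 * 75 ^ 2`.
-/

theorem exists_pow_eq_neg_one_of_prime {R : Type*} [Monoid R] [HasDistribNeg R]
    (h : IsSquare (-1 : R)) {p : ℕ} (hp : p.Prime) : ∃ c : R, c ^ p = -1 := by
  obtain rfl | hodd := hp.eq_two_or_odd'
  · obtain ⟨i, hi⟩ := h
    exact ⟨i, by rw [sq, ← hi]⟩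
  · exact ⟨-1, hodd.neg_one_pow⟩

theorem isSquare_neg_iff_of_isSquare_neg_one {R : Type*} [CommMonoid R] [HasDistribNeg R]
    (h : IsSquare (-1 : R)) {a : R} : IsSquare (-a) ↔ IsSquare a :=
  ⟨fun ha ↦ by simpa using h.mul ha, fun ha ↦ by simpa using h.mul ha⟩

theorem isSquare_mul_sq_iff {G₀ : Type*} [CommGroupWithZero G₀] {a b : G₀} (hb : b ≠ 0) :
    IsSquare (a * b ^ 2) ↔ IsSquare a :=
  ⟨fun h ↦ by simpa [hb] using h.div (IsSquare.sq b), fun h ↦ h.mul (IsSquare.sq b)⟩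

section Field

variable {K : Type*} [Field K]

theorem norm_gen_of_minpoly_eq_X_pow_sub_C {L : Type*} [Field L] [Algebra K L] {n : ℕ}
    (hn : n ≠ 0) {a : K} {x : L} (hx : minpoly K x = X ^ n - C a) :
    Algebra.norm K (IntermediateField.AdjoinSimple.gen K x) = (-1) ^ (n + 1) * a := by
  have hint : IsIntegral K x :=
    minpoly.ne_zero_iff.mp (hx ▸ X_pow_sub_C_ne_zero (Nat.pos_of_ne_zero hn) a)
  rw [← IntermediateField.adjoin.powerBasis_gen hint,
    Algebra.PowerBasis.norm_gen_eq_coeff_zero_minpoly]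
  simp [IntermediateField.minpoly_gen, hx, hn.symm, pow_succ]

theorem exists_pow_eq_of_pow_eq_gen {L : Type*} [Field L] [Algebra K L] (h : IsSquare (-1 : K))
    {n q : ℕ} (hn : n ≠ 0) (hq : q.Prime) {a : K} {x : L} (hx : minpoly K x = X ^ n - C a)
    {b : IntermediateField.adjoin K {x}} (hb : b ^ q = IntermediateField.AdjoinSimple.gen K x) :
    ∃ c : K, c ^ q = a := by
  have hnorm : Algebra.norm K b ^ q = (-1) ^ (n + 1) * a := by
    rw [← map_pow, hb, norm_gen_of_minpoly_eq_X_pow_sub_C hn hx]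
  obtain ⟨ε, hε⟩ := exists_pow_eq_neg_one_of_prime h hq
  refine ⟨ε ^ (n + 1) * Algebra.norm K b, ?_⟩
  rw [mul_pow, pow_right_comm, hε, hnorm, ← mul_assoc, ← mul_pow, neg_one_mul, neg_neg, one_pow,
    one_mul]

theorem X_pow_sub_C_irreducible_of_isSquare_neg_one (h : IsSquare (-1 : K)) {n : ℕ} (hn : n ≠ 0)
    {a : K} (ha : ∀ p : ℕ, p.Prime → p ∣ n → ∀ b : K, b ^ p ≠ a) :
    Irreducible (X ^ n - C a) := by
  induction n using induction_on_primes generalizing K a with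
  | zero => exact absurd rfl hn
  | one => simpa only [pow_one] using irreducible_X_sub_C a
  | prime_mul p n hp ih =>
    rw [mul_comm]
    refine X_pow_mul_sub_C_irreducible
      (X_pow_sub_C_irreducible_of_prime hp (ha p hp (dvd_mul_right p n))) fun E _ _ x hx ↦ ?_
    have h' : IsSquare (-1 : IntermediateField.adjoin K {x}) := by
      simpa using h.map (algebraMap K (IntermediateField.adjoin K {x}))
    refine ih h' (right_ne_zero_of_mul hn) fun q hq hqn b hb ↦ ?_
    obtain ⟨c, hc⟩ := exists_pow_eq_of_pow_eq_gen h hp.ne_zero hq hx hb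
    exact ha q hq (dvd_mul_of_dvd_right hqn p) c hc

theorem X_pow_two_pow_sub_C_irreducible_iff_of_isSquare_neg_one (h : IsSquare (-1 : K)) {n : ℕ}
    (hn : n ≠ 0) {a : K} :
    Irreducible (X ^ 2 ^ n - C a) ↔ ¬ IsSquare a := by
  rw [isSquare_iff_exists_sq]
  refine ⟨fun hirr ⟨b, hb⟩ ↦ pow_ne_of_irreducible_X_pow_sub_C hirr (dvd_pow_self 2 hn)
    (by norm_num) b hb.symm, fun ha ↦ ?_⟩
  refine X_pow_sub_C_irreducible_of_isSquare_neg_one h (by positivity) fun p hp hpn b hb ↦ ?_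
  obtain rfl : p = 2 := (Nat.prime_dvd_prime_iff_eq hp Nat.prime_two).mp (hp.dvd_of_dvd_pow hpn)
  exact ha ⟨b, hb.symm⟩

theorem one_add_C_mul_X_pow_two_pow_irreducible_iff_of_isSquare_neg_one (h : IsSquare (-1 : K))
    {n : ℕ} (hn : n ≠ 0) {c : K} :
    Irreducible (1 + C c * X ^ 2 ^ n) ↔ ¬ IsSquare c := by
  obtain rfl | hc := eq_or_ne c 0
  · simp
  have hfactor : 1 + C c * X ^ 2 ^ n = C c * (X ^ 2 ^ n - C (-c⁻¹)) := by
    rw [mul_sub, ← C_mul, mul_neg, mul_inv_cancel₀ hc, C_neg, C_1]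
    ring
  rw [hfactor, irreducible_isUnit_mul (isUnit_C.mpr hc.isUnit),
    X_pow_two_pow_sub_C_irreducible_iff_of_isSquare_neg_one h hn,
    isSquare_neg_iff_of_isSquare_neg_one h, isSquare_inv]

theorem isSquare_84375_iff : IsSquare (84375 : K) ↔ IsSquare (15 : K) := by
  have hfactor : (84375 : K) = 15 * 75 ^ 2 := by norm_num
  rw [hfactor]
  obtain h15 | h15 := eq_or_ne (15 : K) 0
  · simp [h15]
  · have h75 : (75 : K) ≠ 0 := fun h75 ↦ pow_ne_zero 2 h15 (by linear_combination 3 * h75)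
    exact isSquare_mul_sq_iff h75

theorem stmt_15_general {i : K} (hi : i ^ 2 = -1) :
    Irreducible (1 + C (84375 : K) * X ^ 4) ↔ ¬ ∃ x : K, x ^ 2 = 15 := by
  have h : IsSquare (-1 : K) := hi ▸ IsSquare.sq i
  have hirr :=
    one_add_C_mul_X_pow_two_pow_irreducible_iff_of_isSquare_neg_one h two_ne_zero (c := 84375)
  rw [isSquare_84375_iff, isSquare_iff_exists_sq] at hirr
  simpa only [Nat.reducePow, eq_comm] using hirr

end Field

/-- §4.3(b): let `k` be a number field containing a square root of `-1`, and
`S(T) = 1 + 84375 T⁴` (with `84375 = 5⁵·3³`). Then `S` is irreducible over `k` if and only if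
`15` is not a square in `k`. -/
theorem stmt_15 (k : Type*) [Field k] [NumberField k]
    (i : k) (hi : i ^ 2 = -1) :
    Irreducible (1 + Polynomial.C (84375 : k) * Polynomial.X ^ 4) ↔
      ¬ ∃ x : k, x ^ 2 = 15 :=
  stmt_15_general hi
end

section
/- Let k be a number field containing a square root of −1 (i.e., there exists i ∈ k with i² = −1). Consider the polynomial S(T) = 1 + 84375·T⁴ ∈ k[T] (where 84375 = 5⁵·3³). Then S(T) is a product of two irreducible quadratic polynomials in k[T] if and only if there exists z ∈ k with z² = −375 and z is not a square in k (i.e., there is no w ∈ k with w² = z). -/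
open Polynomial

/-!
Modulo a quadratic divisor of `1 + d T⁴` the class `α` of `T` satisfies `d α⁴ = -1`, so its norm `ν`
satisfies `(d ν²)² = 1`: up to sign `d` is a square, and `-d = y²` for some `y` when `-1` is a
square. Then `1 + d T⁴ = (1 - y T²)(1 + y T²)`, whose factors are irreducible exactly when `y` is
not a square. For `d = 15³ · 5²` one passes from `y` to `z = y / 15`, because `15 = -(z / 5)²` is
itself a square.
-/

section Field

variable {K : Type*} [Field K]

theorem exists_pow_natDegree_mul_pow_eq_of_dvd_one_add_C_mul_X_pow {f : K[X]} (hf : f ≠ 0)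
    {d : K} {n : ℕ} (h : f ∣ 1 + C d * X ^ n) :
    ∃ ν : K, d ^ f.natDegree * ν ^ n = (-1) ^ f.natDegree := by
  have hfin : Module.finrank K (AdjoinRoot f) = f.natDegree := (AdjoinRoot.powerBasis hf).finrank
  have hroot : algebraMap K (AdjoinRoot f) d * AdjoinRoot.root f ^ n =
      algebraMap K (AdjoinRoot f) (-1) := by
    have hzero : AdjoinRoot.mk f (1 + C d * X ^ n) = 0 := AdjoinRoot.mk_eq_zero.mpr h
    simp only [map_add, map_one, map_mul, map_pow, AdjoinRoot.mk_C, AdjoinRoot.mk_X] at hzero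
    rw [map_neg, map_one]
    exact (neg_eq_of_add_eq_zero_right hzero).symm
  have hnorm := congrArg (Algebra.norm K) hroot
  rw [map_mul, map_pow, Algebra.norm_algebraMap, Algebra.norm_algebraMap, hfin] at hnorm
  exact ⟨Algebra.norm K (AdjoinRoot.root f), hnorm⟩

theorem isSquare_neg_of_dvd_one_add_C_mul_X_pow_four (hneg : IsSquare (-1 : K)) {d : K} {f : K[X]}
    (hf : f.natDegree = 2) (h : f ∣ 1 + C d * X ^ 4) : IsSquare (-d) := by
  obtain ⟨ν, hν⟩ := exists_pow_natDegree_mul_pow_eq_of_dvd_one_add_C_mul_X_pow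
    (ne_zero_of_natDegree_gt (hf ▸ two_pos)) h
  rw [hf, neg_one_sq] at hν
  have hν0 : ν ≠ 0 := by
    rintro rfl
    simp at hν
  have hsq : IsSquare (-(d * ν ^ 2)) := by
    have : (d * ν ^ 2) ^ 2 = 1 := by linear_combination hν
    rcases sq_eq_one_iff.mp this with h1 | h1
    · rwa [h1]
    · simp [h1]
  have hdiv : -d = -(d * ν ^ 2) / ν ^ 2 := by field_simp
  exact hdiv ▸ hsq.div (.sq ν)

theorem irreducible_one_sub_C_mul_X_pow_iff_of_prime {p : ℕ} (hp : p.Prime) {a : K} (ha : a ≠ 0) :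
    Irreducible (1 - C a * X ^ p) ↔ ∀ b : K, b ^ p ≠ a := by
  have hunit : IsUnit (C (-a)) := isUnit_C.mpr (neg_ne_zero.mpr ha).isUnit
  have hfactor : (1 - C a * X ^ p : K[X]) = C (-a) * (X ^ p - C a⁻¹) := by
    have : C a * C a⁻¹ = (1 : K[X]) := by rw [← C_mul, mul_inv_cancel₀ ha, C_1]
    rw [C_neg]
    linear_combination -this
  rw [hfactor, irreducible_isUnit_mul hunit, X_pow_sub_C_irreducible_iff_of_prime hp,
    inv_surjective.forall]
  simp only [inv_pow, ne_eq, inv_inj]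

theorem irreducible_one_sub_C_mul_X_sq_iff {a : K} (ha : a ≠ 0) :
    Irreducible (1 - C a * X ^ 2) ↔ ¬IsSquare a := by
  simp only [irreducible_one_sub_C_mul_X_pow_iff_of_prime Nat.prime_two ha,
    isSquare_iff_exists_sq, not_exists, ne_comm, ne_eq]

theorem natDegree_one_sub_C_mul_X_pow {a : K} (ha : a ≠ 0) (n : ℕ) :
    (1 - C a * X ^ n).natDegree = n := by
  rw [natDegree_sub, ← C_1, natDegree_sub_C, natDegree_C_mul_X_pow n a ha]

theorem not_isSquare_of_one_add_C_mul_X_pow_four_eq_mul {f g : K[X]} (hf : f.natDegree ≠ 1)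
    (hg : g.natDegree ≠ 1) (hfi : Irreducible f) (hgi : Irreducible g) {d y : K}
    (h : 1 + C d * X ^ 4 = f * g) (hy : y ^ 2 = -d) : ¬IsSquare y := by
  rintro ⟨r, rfl⟩
  have hr : r ≠ 0 := by
    rintro rfl
    obtain rfl : d = 0 := by linear_combination hy
    exact hfi.not_isUnit (.of_mul_eq_one g (by simpa using h.symm))
  have hroot : (f * g).IsRoot r⁻¹ := by
    obtain rfl : d = -r ^ 4 := by linear_combination hy
    simp [← h, hr]
  rcases root_mul.mp hroot with hroot | hroot
  · exact hfi.not_isRoot_of_natDegree_ne_one hf hroot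
  · exact hgi.not_isRoot_of_natDegree_ne_one hg hroot

theorem exists_one_add_C_mul_X_pow_four_eq_mul_irreducible_iff (hneg : IsSquare (-1 : K)) (d : K) :
    (∃ f g : K[X], f.natDegree = 2 ∧ g.natDegree = 2 ∧ Irreducible f ∧ Irreducible g ∧
        1 + C d * X ^ 4 = f * g) ↔
      ∃ y : K, y ^ 2 = -d ∧ ¬IsSquare y := by
  constructor
  · rintro ⟨f, g, hf, hg, hfi, hgi, h⟩
    obtain ⟨y, hy⟩ := (isSquare_neg_of_dvd_one_add_C_mul_X_pow_four hneg hf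
      (Dvd.intro g h.symm)).exists_sq
    exact ⟨y, hy.symm, not_isSquare_of_one_add_C_mul_X_pow_four_eq_mul (by simp [hf])
      (by simp [hg]) hfi hgi h hy.symm⟩
  · rintro ⟨y, hy, hns⟩
    have hy0 : y ≠ 0 := fun h0 => hns (h0 ▸ .zero)
    have hns' : ¬IsSquare (-y) := fun hsq => hns (by simpa using hneg.mul hsq)
    refine ⟨1 - C y * X ^ 2, 1 - C (-y) * X ^ 2, natDegree_one_sub_C_mul_X_pow hy0 2,
      natDegree_one_sub_C_mul_X_pow (neg_ne_zero.mpr hy0) 2,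
      (irreducible_one_sub_C_mul_X_sq_iff hy0).mpr hns,
      (irreducible_one_sub_C_mul_X_sq_iff (neg_ne_zero.mpr hy0)).mpr hns', ?_⟩
    obtain rfl : d = -y ^ 2 := by linear_combination hy
    simp only [C_neg, C_pow]
    ring

theorem isSquare_mul_iff_of_isSquare {a b : K} (ha0 : a ≠ 0) (ha : IsSquare a) :
    IsSquare (a * b) ↔ IsSquare b :=
  ⟨fun hab => by simpa [ha0] using hab.div ha, ha.mul⟩

theorem isSquare_mul_iff_of_sq_eq_neg (hneg : IsSquare (-1 : K)) {c e z : K} (hc : c ≠ 0)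
    (he : e ≠ 0) (hz : z ^ 2 = -(c * e ^ 2)) : IsSquare (c * z) ↔ IsSquare z := by
  have hc_eq : c = -1 * (z / e) ^ 2 := by
    field_simp
    linear_combination hz
  exact isSquare_mul_iff_of_isSquare hc (hc_eq ▸ hneg.mul (.sq _))

theorem exists_sq_eq_neg_cube_mul_sq_and_not_isSquare_iff (hneg : IsSquare (-1 : K)) (c e : K) :
    (∃ y : K, y ^ 2 = -(c ^ 3 * e ^ 2) ∧ ¬IsSquare y) ↔
      ∃ z : K, z ^ 2 = -(c * e ^ 2) ∧ ¬IsSquare z := by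
  rcases eq_or_ne c 0 with rfl | hc
  · simp
  rcases eq_or_ne e 0 with rfl | he
  · simp
  rw [(mul_left_surjective₀ hc).exists]
  refine exists_congr fun z => ?_
  have hsq : (c * z) ^ 2 = -(c ^ 3 * e ^ 2) ↔ z ^ 2 = -(c * e ^ 2) := by
    have hfactor : -(c ^ 3 * e ^ 2) = c ^ 2 * -(c * e ^ 2) := by ring
    rw [mul_pow, hfactor, mul_right_inj' (pow_ne_zero 2 hc)]
  rw [hsq, and_congr_right_iff]
  exact fun hz => not_congr (isSquare_mul_iff_of_sq_eq_neg hneg hc he hz)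

theorem stmt_16_general (i : K) (hi : i ^ 2 = -1) :
    (∃ f g : K[X], f.natDegree = 2 ∧ g.natDegree = 2 ∧ Irreducible f ∧ Irreducible g ∧
        1 + C (84375 : K) * X ^ 4 = f * g) ↔
      ∃ z : K, z ^ 2 = -375 ∧ ¬∃ w : K, w ^ 2 = z := by
  have hneg : IsSquare (-1 : K) := hi ▸ .sq i
  have h84375 : (84375 : K) = 15 ^ 3 * 5 ^ 2 := by norm_num
  have h375 : (375 : K) = 15 * 5 ^ 2 := by norm_num
  rw [exists_one_add_C_mul_X_pow_four_eq_mul_irreducible_iff hneg, h84375,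
    exists_sq_eq_neg_cube_mul_sq_and_not_isSquare_iff hneg, h375]
  simp only [isSquare_iff_exists_sq, eq_comm]

end Field

/-- §4.3(b): let `k` be a number field containing a square root of `-1`, and
`S(T) = 1 + 84375 T⁴` (with `84375 = 5⁵·3³`). Then `S` is a product of two irreducible
quadratic polynomials over `k` if and only if there is `z ∈ k` with `z² = -375`
(i.e. `z = 5i√15`) which is not a square in `k`. -/
theorem stmt_16 (k : Type*) [Field k] [NumberField k]
    (i : k) (hi : i ^ 2 = -1) :
    (∃ f g : Polynomial k, f.natDegree = 2 ∧ g.natDegree = 2 ∧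
        Irreducible f ∧ Irreducible g ∧
        1 + Polynomial.C (84375 : k) * Polynomial.X ^ 4 = f * g) ↔
      ∃ z : k, z ^ 2 = -375 ∧ ¬ ∃ w : k, w ^ 2 = z :=
  stmt_16_general i hi
end
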